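/- arXiv:2201.03142 — 5 statements merged into one kernel-verified Lean document; each statement's English description precedes it below -/
import Mathlib

section
/- Let F1 and F2 be families of connected graphs and let G be a graph. Then the following are equivalent: (1) every connected component of G is F1-free or F2-free; (2) G is sp(F1,F2)-free, and there is no connected component C of G and no pair (H1,H2) ∈ Fp(F1,F2) such that both H1 and H2 are isomorphic to induced subgraphs of C. -/
open SimpleGraph

/-- A (finite simple) graph packaged with its vertex type. -/
abbrev GraphSig : Type 1 := (V : Type) × SimpleGraph V

/-- `G` contains an induced subgraph isomorphic to `H`. -/
def ContainsInduced {V W : Type*} (G : SimpleGraph V) (H : SimpleGraph W) : Prop :=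
  Nonempty (H ↪g G)

/-- `G` is `F`-free: no induced subgraph of `G` is isomorphic to a member of `F`. -/
def FamFree {V : Type*} (G : SimpleGraph V) (F : Set GraphSig) : Prop :=
  ∀ H ∈ F, ¬ ContainsInduced G H.2

/-- The super-pruned family `sp(F1, F2)`: graphs that belong to one of the two families
and have a member of the other family as an induced subgraph. -/
def spFamily (F1 F2 : Set GraphSig) : Set GraphSig :=
  {H | (H ∈ F1 ∧ ∃ H2 ∈ F2, ContainsInduced H.2 H2.2) ∨
       (H ∈ F2 ∧ ∃ H1 ∈ F1, ContainsInduced H.2 H1.2)}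

/-- The forbidden-pair family `Fp(F1, F2)`: pairs `(H1, H2) ∈ F1 × F2` such that
neither `H1` nor `H2` belongs to `sp(F1, F2)`. -/
def forbiddenPairs (F1 F2 : Set GraphSig) : Set (GraphSig × GraphSig) :=
  {p | p.1 ∈ F1 ∧ p.2 ∈ F2 ∧ p.1 ∉ spFamily F1 F2 ∧ p.2 ∉ spFamily F1 F2}

/-!
Whether a single graph is `F1`-free or `F2`-free has an obstruction description that needs no
connectivity: a graph containing some `H1 ∈ F1` and some `H2 ∈ F2` contains either a member of
`sp(F1, F2)`, or the pair `(H1, H2)`, which then lies in `Fp(F1, F2)`. Applying this to each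
component, the only global step is that an induced copy of a connected graph lies inside one
component, so being `sp(F1, F2)`-free can be tested componentwise.
-/

section

variable {U V W : Type*} {G : SimpleGraph U} {H : SimpleGraph V} {K : SimpleGraph W}
  {F F1 F2 : Set GraphSig}

theorem ContainsInduced.trans (hGH : ContainsInduced G H) (hHK : ContainsInduced H K) :
    ContainsInduced G K :=
  IsIndContained.trans hHK hGH

theorem containsInduced_induce (G : SimpleGraph U) (s : Set U) :
    ContainsInduced G (G.induce s) :=
  ⟨Embedding.induce s⟩

theorem containsInduced_induce_of_forall_mem {s : Set U} (f : H ↪g G) (hf : ∀ v, f v ∈ s) :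
    ContainsInduced (G.induce s) H :=
  ⟨RelEmbedding.codRestrict s f hf⟩

theorem ContainsInduced.exists_connectedComponent (hGH : ContainsInduced G H)
    (hH : H.Connected) :
    ∃ c : G.ConnectedComponent, ContainsInduced (G.induce c.supp) H := by
  obtain ⟨f⟩ := hGH
  obtain ⟨v₀⟩ := hH.nonempty
  refine ⟨G.connectedComponentMk (f v₀), containsInduced_induce_of_forall_mem f fun v ↦ ?_⟩
  exact ConnectedComponent.sound ((hH.preconnected v v₀).map f.toHom)

theorem FamFree.of_containsInduced (hG : FamFree G F) (hGH : ContainsInduced G H) :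
    FamFree H F :=
  fun K hK hHK ↦ hG K hK (hGH.trans hHK)

theorem famFree_iff_forall_connectedComponent (hF : ∀ H ∈ F, H.2.Connected) :
    FamFree G F ↔ ∀ c : G.ConnectedComponent, FamFree (G.induce c.supp) F := by
  refine ⟨fun hG c ↦ hG.of_containsInduced (containsInduced_induce G c.supp), ?_⟩
  intro hcomp H hH hGH
  obtain ⟨c, hcH⟩ := hGH.exists_connectedComponent (hF H hH)
  exact hcomp c H hH hcH

theorem FamFree.spFamily_of_left (hG : FamFree G F1) : FamFree G (spFamily F1 F2) := by
  rintro H (⟨hH, -⟩ | ⟨-, H1, hH1, hHH1⟩) hGH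
  · exact hG H hH hGH
  · exact hG H1 hH1 (hGH.trans hHH1)

theorem FamFree.spFamily_of_right (hG : FamFree G F2) : FamFree G (spFamily F1 F2) := by
  rintro H (⟨-, H2, hH2, hHH2⟩ | ⟨hH, -⟩) hGH
  · exact hG H2 hH2 (hGH.trans hHH2)
  · exact hG H hH hGH

theorem FamFree.mk_mem_forbiddenPairs {H1 H2 : GraphSig} (hG : FamFree G (spFamily F1 F2))
    (hH1 : H1 ∈ F1) (hH2 : H2 ∈ F2) (hGH1 : ContainsInduced G H1.2)
    (hGH2 : ContainsInduced G H2.2) : (H1, H2) ∈ forbiddenPairs F1 F2 :=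
  ⟨hH1, hH2, fun hsp ↦ hG H1 hsp hGH1, fun hsp ↦ hG H2 hsp hGH2⟩

theorem famFree_or_famFree_iff :
    FamFree G F1 ∨ FamFree G F2 ↔
      FamFree G (spFamily F1 F2) ∧
        ¬ ∃ p ∈ forbiddenPairs F1 F2, ContainsInduced G p.1.2 ∧ ContainsInduced G p.2.2 := by
  constructor
  · rintro (hG | hG)
    · exact ⟨hG.spFamily_of_left, fun ⟨p, hp, hGp, _⟩ ↦ hG p.1 hp.1 hGp⟩
    · exact ⟨hG.spFamily_of_right, fun ⟨p, hp, _, hGp⟩ ↦ hG p.2 hp.2.1 hGp⟩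
  · rintro ⟨hsp, hpair⟩
    refine or_iff_not_imp_left.mpr fun hG1 H2 hH2 hGH2 ↦ hG1 fun H1 hH1 hGH1 ↦ ?_
    exact hpair ⟨(H1, H2), hsp.mk_mem_forbiddenPairs hH1 hH2 hGH1 hGH2, hGH1, hGH2⟩

end

theorem stmt4_general {V : Type*} (G : SimpleGraph V) (F1 F2 : Set GraphSig)
    (hsp : ∀ H ∈ spFamily F1 F2, H.2.Connected) :
    (∀ c : G.ConnectedComponent,
        FamFree (G.induce c.supp) F1 ∨ FamFree (G.induce c.supp) F2) ↔
      (FamFree G (spFamily F1 F2) ∧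
        ¬ ∃ (c : G.ConnectedComponent) (p : GraphSig × GraphSig),
            p ∈ forbiddenPairs F1 F2 ∧
            ContainsInduced (G.induce c.supp) p.1.2 ∧
            ContainsInduced (G.induce c.supp) p.2.2) := by
  rw [famFree_iff_forall_connectedComponent hsp, not_exists, ← forall_and]
  exact forall_congr' fun _ ↦ famFree_or_famFree_iff

theorem stmt4 {V : Type} [Fintype V] (G : SimpleGraph V) (F1 F2 : Set GraphSig)
    (hF1 : ∀ H ∈ F1, H.2.Connected) (hF2 : ∀ H ∈ F2, H.2.Connected) :
    (∀ c : G.ConnectedComponent,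
        FamFree (G.induce c.supp) F1 ∨ FamFree (G.induce c.supp) F2) ↔
      (FamFree G (spFamily F1 F2) ∧
        ¬ ∃ (c : G.ConnectedComponent) (p : GraphSig × GraphSig),
            p ∈ forbiddenPairs F1 F2 ∧
            ContainsInduced (G.induce c.supp) p.1.2 ∧
            ContainsInduced (G.induce c.supp) p.2.2) :=
  stmt4_general G F1 F2 fun H hH ↦ hH.elim (fun h ↦ hF1 H h.1) (fun h ↦ hF2 H h.1)
end

section
/- Let F1 and F2 be families of connected graphs such that the path P_α on α ≥ 1 vertices belongs to F1, and let G be a graph. Then every connected component of G is F1-free or F2-free if and only if there do not exist J1, J2 ⊆ V(G) with G[J1] isomorphic to a member of F1, G[J2] isomorphic to a member of F2, and d_G(J1,J2) ≤ α − 1. -/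
open SimpleGraph

/-- `d_G(P, Q)`: the minimum over `u ∈ P`, `v ∈ Q` of the shortest-path distance
from `u` to `v` in `G` (as an extended natural number, `⊤` if no path exists). -/
noncomputable def eSetDist {V : Type*} (G : SimpleGraph V) (P Q : Set V) : ℕ∞ :=
  ⨅ (u : V) (_ : u ∈ P) (v : V) (_ : v ∈ Q), G.edist u v

/-! If a component contains copies of both `H1 ∈ F1` and `H2 ∈ F2`, take a shortest path from the
copy of `H2` to the copy of `H1`. Either it has length at most `α - 1`, or its first `α` vertices
induce a `P_α` that meets the copy of `H2`; both ways some pair is at distance at most `α - 1`.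
Conversely, two connected sets at finite distance lie in a common component. -/

section Geodesic

variable {V : Type*} {G : SimpleGraph V} {u v : V} {p : G.Walk u v}

theorem dist_getVert_getVert_add_of_length_eq_dist (hp : p.length = G.dist u v) {i k : ℕ}
    (hik : i + k ≤ p.length) : G.dist (p.getVert i) (p.getVert (i + k)) = k := by
  have hsub : ((p.drop i).take k).IsSubwalk p :=
    ((p.drop i).isSubwalk_take k).trans (p.isSubwalk_drop i)
  rw [← Walk.drop_getVert, ← length_eq_dist_of_subwalk hp hsub, Walk.take_length,
    Walk.drop_length]
  omega

theorem adj_getVert_iff_of_length_eq_dist (hp : p.length = G.dist u v) {i j : ℕ} (hi : i ≤ p.length)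
    (hj : j ≤ p.length) : G.Adj (p.getVert i) (p.getVert j) ↔ i + 1 = j ∨ j + 1 = i := by
  wlog hij : i ≤ j generalizing i j
  · rw [G.adj_comm, this hj hi (by omega), or_comm]
  obtain ⟨k, rfl⟩ := Nat.exists_eq_add_of_le hij
  rw [← dist_eq_one_iff_adj, dist_getVert_getVert_add_of_length_eq_dist hp hj]
  omega

/-- The first `n` vertices of a geodesic `p`, as an induced path on `n` vertices. -/
def geodesicEmbedding (hp : p.length = G.dist u v) {n : ℕ} (hn : n ≤ p.length + 1) :
    pathGraph n ↪g G where
  toFun i := p.getVert i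
  inj' i j hij := Fin.ext <|
    (p.isPath_of_length_eq_dist hp).getVert_injOn (Set.mem_ofPred.2 (by omega))
      (Set.mem_ofPred.2 (by omega)) hij
  map_rel_iff' {i j} := by
    rw [pathGraph_adj]
    exact adj_getVert_iff_of_length_eq_dist hp (by omega) (by omega)

theorem edist_le_or_exists_pathGraph_embedding (huv : G.Reachable u v) (n : ℕ) :
    G.edist u v ≤ n ∨ ∃ f : pathGraph (n + 1) ↪g G, f 0 = u := by
  obtain ⟨p, hp⟩ := huv.exists_walk_length_eq_dist
  rcases le_or_gt p.length n with hle | hlt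
  · exact .inl ((edist_le p).trans (by exact_mod_cast hle))
  · exact .inr ⟨geodesicEmbedding hp (by omega), p.getVert_zero⟩

end Geodesic

section SetDistance

variable {V : Type*} {G : SimpleGraph V} {P Q : Set V}

theorem eSetDist_le_edist {u v : V} (hu : u ∈ P) (hv : v ∈ Q) : eSetDist G P Q ≤ G.edist u v :=
  iInf₂_le_of_le u hu (iInf₂_le v hv)

theorem exists_reachable_of_eSetDist_ne_top (h : eSetDist G P Q ≠ ⊤) :
    ∃ u ∈ P, ∃ v ∈ Q, G.Reachable u v := by
  simp only [eSetDist, ← lt_top_iff_ne_top, iInf_lt_iff] at h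
  obtain ⟨u, hu, v, hv, huv⟩ := h
  exact ⟨u, hu, v, hv, reachable_of_edist_ne_top huv.ne⟩

theorem subset_supp_of_preconnected_induce (hP : (G.induce P).Preconnected)
    {c : G.ConnectedComponent} {u : V} (hu : u ∈ P) (huc : u ∈ c.supp) : P ⊆ c.supp := by
  intro x hx
  have hxu : G.Reachable x u := (hP ⟨x, hx⟩ ⟨u, hu⟩).map (Embedding.induce P).toHom
  exact (ConnectedComponent.sound hxu).trans huc

theorem exists_subset_supp_of_eSetDist_ne_top (hP : (G.induce P).Preconnected)
    (hQ : (G.induce Q).Preconnected) (h : eSetDist G P Q ≠ ⊤) :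
    ∃ c : G.ConnectedComponent, P ⊆ c.supp ∧ Q ⊆ c.supp := by
  obtain ⟨u, hu, v, hv, huv⟩ := exists_reachable_of_eSetDist_ne_top h
  exact ⟨G.connectedComponentMk u, subset_supp_of_preconnected_induce hP hu rfl,
    subset_supp_of_preconnected_induce hQ hv (ConnectedComponent.sound huv.symm)⟩

theorem eSetDist_le_or_exists_induced_pathGraph {c : G.ConnectedComponent} (hP : P.Nonempty)
    (hQ : Q.Nonempty) (hPc : P ⊆ c.supp) (hQc : Q ⊆ c.supp) (n : ℕ) :
    eSetDist G P Q ≤ n ∨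
      ∃ J : Set V, Nonempty (pathGraph (n + 1) ≃g G.induce J) ∧ eSetDist G J Q = 0 := by
  obtain ⟨u, hu⟩ := hP
  obtain ⟨v, hv⟩ := hQ
  have hvu : G.Reachable v u := c.reachable_of_mem_supp (hQc hv) (hPc hu)
  rcases edist_le_or_exists_pathGraph_embedding hvu n with hle | ⟨f, hf⟩
  · exact .inl ((eSetDist_le_edist hu hv).trans (edist_comm.trans_le hle))
  · refine .inr ⟨Set.range f, ⟨f.isoInduceRange⟩, nonpos_iff_eq_zero.1 ?_⟩
    exact (eSetDist_le_edist (Set.mem_range.2 ⟨0, hf⟩) hv).trans_eq edist_self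

end SetDistance

section InducedMember

variable {V : Type*} {G : SimpleGraph V} {F : Set GraphSig} {J : Set V}

/-- `G[J]` is isomorphic to a member of the family `F`. -/
def InducesMember (G : SimpleGraph V) (F : Set GraphSig) (J : Set V) : Prop :=
  ∃ H ∈ F, Nonempty (H.2 ≃g G.induce J)

theorem InducesMember.connected (hJ : InducesMember G F J) (hF : ∀ H ∈ F, H.2.Connected) :
    (G.induce J).Connected := by
  obtain ⟨H, hH, ⟨e⟩⟩ := hJ
  exact e.connected_iff.1 (hF H hH)

theorem InducesMember.nonempty (hJ : InducesMember G F J) (hF : ∀ H ∈ F, H.2.Connected) :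
    J.Nonempty :=
  Set.nonempty_coe_sort.1 (hJ.connected hF).nonempty

theorem containsInduced_induce_iff {W : Type*} {H : SimpleGraph W} {s : Set V} :
    ContainsInduced (G.induce s) H ↔ ∃ J ⊆ s, Nonempty (H ≃g G.induce J) := by
  constructor
  · rintro ⟨f⟩
    let g : H ↪g G := (Embedding.induce s).comp f
    exact ⟨Set.range g, Set.range_subset_iff.2 fun x ↦ (f x).2, ⟨g.isoInduceRange⟩⟩
  · rintro ⟨J, hJs, ⟨e⟩⟩
    exact ⟨(G.induceHomOfLE hJs).comp e.toEmbedding⟩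

theorem not_famFree_induce_iff {s : Set V} :
    ¬ FamFree (G.induce s) F ↔ ∃ J ⊆ s, InducesMember G F J := by
  simp only [FamFree, InducesMember, containsInduced_induce_iff, not_forall, not_not]
  grind

end InducedMember

theorem stmt6_general {V : Type*} (G : SimpleGraph V) (F1 F2 : Set GraphSig)
    (hF1 : ∀ H ∈ F1, H.2.Connected) (hF2 : ∀ H ∈ F2, H.2.Connected) (α : ℕ)
    (hpath : (⟨Fin α, SimpleGraph.pathGraph α⟩ : GraphSig) ∈ F1) :
    (∀ c : G.ConnectedComponent,
        FamFree (G.induce c.supp) F1 ∨ FamFree (G.induce c.supp) F2) ↔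
      ¬ ∃ J1 J2 : Set V, InducesMember G F1 J1 ∧ InducesMember G F2 J2 ∧
          eSetDist G J1 J2 ≤ ((α - 1 : ℕ) : ℕ∞) := by
  rw [← not_iff_not, not_not]
  simp only [not_forall, not_or, not_famFree_induce_iff]
  constructor
  · rintro ⟨c, ⟨J1, hJ1c, hJ1⟩, ⟨J2, hJ2c, hJ2⟩⟩
    obtain ⟨n, rfl⟩ : ∃ n, α = n + 1 :=
      Nat.exists_eq_succ_of_ne_zero (Fin.pos_iff_nonempty.2 (hF1 _ hpath).nonempty).ne'
    rcases eSetDist_le_or_exists_induced_pathGraph (hJ1.nonempty hF1) (hJ2.nonempty hF2)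
      hJ1c hJ2c n with hle | ⟨J, hJ, hdist⟩
    · exact ⟨J1, J2, hJ1, hJ2, hle⟩
    · exact ⟨J, J2, ⟨_, hpath, hJ⟩, hJ2, hdist.trans_le zero_le⟩
  · rintro ⟨J1, J2, hJ1, hJ2, hdist⟩
    obtain ⟨c, hJ1c, hJ2c⟩ := exists_subset_supp_of_eSetDist_ne_top
      (hJ1.connected hF1).preconnected (hJ2.connected hF2).preconnected
      (ne_top_of_le_ne_top (ENat.natCast_ne_top _) hdist)
    exact ⟨c, ⟨J1, hJ1c, hJ1⟩, ⟨J2, hJ2c, hJ2⟩⟩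

theorem stmt6 {V : Type} [Fintype V] (G : SimpleGraph V) (F1 F2 : Set GraphSig)
    (hF1 : ∀ H ∈ F1, H.2.Connected) (hF2 : ∀ H ∈ F2, H.2.Connected)
    (α : ℕ) (hα : 1 ≤ α)
    (hpath : (⟨Fin α, SimpleGraph.pathGraph α⟩ : GraphSig) ∈ F1) :
    (∀ c : G.ConnectedComponent,
        FamFree (G.induce c.supp) F1 ∨ FamFree (G.induce c.supp) F2) ↔
      ¬ ∃ J1 J2 : Set V,
          (∃ H1 ∈ F1, Nonempty (H1.2 ≃g G.induce J1)) ∧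
          (∃ H2 ∈ F2, Nonempty (H2.2 ≃g G.induce J2)) ∧
          eSetDist G J1 J2 ≤ ((α - 1 : ℕ) : ℕ∞) :=
  stmt6_general G F1 F2 hF1 hF2 α hpath
end

section
/- Let G be a graph, J* ⊆ V(G) with G[J*] isomorphic to the claw K_{1,3}, and T* ⊆ V(G) with G[T*] isomorphic to the triangle K_3, such that d := d_G(J*,T*) is finite and (J*,T*) is a closest claw–triangle pair: for all J, T ⊆ V(G) with G[J] ≅ K_{1,3}, G[T] ≅ K_3 and d_G(J,T) finite, one has d ≤ d_G(J,T). Assume d ≥ 2 and let P* = x_0 x_1 ⋯ x_d be a shortest path in G with x_0 = u ∈ J* and x_d = v ∈ T*. Let C be the connected component of G − (J* ∪ T*) containing x_1. Then V(C) = {x_1, …, x_{d−1}}, the graph C is exactly the path x_1 ⋯ x_{d−1}, and the only edges of G between V(C) and J* ∪ T* are {u, x_1} and {x_{d−1}, v}. -/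
open SimpleGraph

/-- The claw `K_{1,3}`: center `0` joined to the leaves `1`, `2`, `3`. -/
def clawGraph : SimpleGraph (Fin 4) :=
  SimpleGraph.fromEdgeSet {s(0, 1), s(0, 2), s(0, 3)}

/-- The triangle `K_3`. -/
def triangleGraph : SimpleGraph (Fin 3) := ⊤

/-!
Let `x_0, …, x_d` be the vertices of the path. By minimality no `x_i` with `i < d` lies on a
triangle and no `x_i` with `i > 0` lies on an induced claw. If an interior vertex `x_i` had a
neighbour `w` other than `x_{i-1}` and `x_{i+1}`, then `x_{i-1}`, `x_{i+1}` and `w` would be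
pairwise nonadjacent, since an edge among them would complete a triangle through `x_{i-1}` or
`x_i`; so `x_i` would be the center of an induced claw. Hence interior vertices have degree two and
the component of `x_1` cannot leave the path.
-/

section InducedSubgraphs

variable {V : Type*} {G : SimpleGraph V} {a b c e : V}

theorem nonempty_clawGraph_iso_induce (hab : G.Adj a b) (hac : G.Adj a c) (hae : G.Adj a e)
    (hbc : b ≠ c) (hbe : b ≠ e) (hce : c ≠ e)
    (nbc : ¬G.Adj b c) (nbe : ¬G.Adj b e) (nce : ¬G.Adj c e) :
    Nonempty (clawGraph ≃g G.induce {a, b, c, e}) := by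
  have hinj : Function.Injective ![a, b, c, e] := by
    intro i j
    fin_cases i <;> fin_cases j <;>
      simp [hab.ne, hac.ne, hae.ne, hab.ne', hac.ne', hae.ne', hbc, hbe, hce, hbc.symm, hbe.symm,
        hce.symm]
  let f : clawGraph ↪g G :=
    { toFun := ![a, b, c, e]
      inj' := hinj
      map_rel_iff' := by
        intro i j
        fin_cases i <;> fin_cases j <;>
          simp [clawGraph, hab, hac, hae, hab.symm, hac.symm, hae.symm, nbc, nbe, nce,
            G.adj_comm c b, G.adj_comm e b, G.adj_comm e c] }
  have hrange : Set.range f = {a, b, c, e} := by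
    change Set.range ![a, b, c, e] = {a, b, c, e}
    simp only [Matrix.range_cons, Matrix.range_empty, Set.union_empty, Set.singleton_union]
  exact hrange ▸ ⟨f.isoInduceRange⟩

theorem nonempty_triangleGraph_iso_induce (hab : G.Adj a b) (hac : G.Adj a c) (hbc : G.Adj b c) :
    Nonempty (triangleGraph ≃g G.induce {a, b, c}) := by
  let f : triangleGraph →g G :=
    { toFun := ![a, b, c]
      map_rel' := by
        intro i j
        fin_cases i <;> fin_cases j <;>
          simp [triangleGraph, hab, hac, hbc, hab.symm, hac.symm, hbc.symm] }
  have hrange : Set.range f = {a, b, c} := by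
    change Set.range ![a, b, c] = {a, b, c}
    simp only [Matrix.range_cons, Matrix.range_empty, Set.union_empty, Set.singleton_union]
  exact hrange ▸ ⟨(f.toCopy f.injective_of_top_hom).topEmbedding.isoInduceRange⟩

end InducedSubgraphs

theorem eSetDist_le_edist_s7 {V : Type*} (G : SimpleGraph V) {P Q : Set V} {a b : V} (ha : a ∈ P)
    (hb : b ∈ Q) : eSetDist G P Q ≤ G.edist a b :=
  iInf₂_le_of_le a ha (iInf₂_le b hb)

theorem isPath_of_length_le_edist {V : Type*} {G : SimpleGraph V} {u v : V} (p : G.Walk u v)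
    (hp : p.length ≤ G.edist u v) : p.IsPath := by
  refine p.isPath_of_length_eq_dist (le_antisymm ?_ (dist_le p))
  rwa [← p.reachable.coe_dist_eq_edist, Nat.cast_le] at hp

theorem supp_connectedComponentMk_eq {V : Type*} {G : SimpleGraph V} {a : V} {K : Set V}
    (ha : a ∈ K) (hclosed : ∀ x ∈ K, ∀ y, G.Adj x y → y ∈ K)
    (hreach : ∀ x ∈ K, G.Reachable a x) : (G.connectedComponentMk a).supp = K := by
  ext x
  rw [ConnectedComponent.mem_supp_iff, ConnectedComponent.eq]
  refine ⟨fun ⟨q⟩ ↦ ?_, fun hx ↦ (hreach x hx).symm⟩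
  by_contra hx
  obtain ⟨e, -, hfst, hsnd⟩ := q.reverse.exists_boundary_dart K ha hx
  exact hsnd (hclosed _ hfst _ e.adj)

section BareWalks

variable {V : Type*} {G : SimpleGraph V} {u v w y : V} {p : G.Walk u v}

/-- The set `{x_1, …, x_{d-1}}` of vertices of a walk `x_0, …, x_d` at positions other than the
first and the last; it is empty when `d ≤ 1`. -/
def walkInterior (p : G.Walk u v) : Set V :=
  {w | ∃ i, 1 ≤ i ∧ i ≤ p.length - 1 ∧ w = p.getVert i}

/-- A walk is bare if the only neighbours in `G` of a vertex at an inner position are its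
predecessor and its successor on the walk. The inner position is written `i + 1` to avoid
subtraction. -/
def IsBareWalk (p : G.Walk u v) : Prop :=
  ∀ i, i + 2 ≤ p.length → ∀ w, G.Adj (p.getVert (i + 1)) w →
    w = p.getVert i ∨ w = p.getVert (i + 2)

theorem adj_start_of_mem_walkInterior (hw : w ∈ walkInterior p) : G.Adj (p.getVert 1) u := by
  obtain ⟨i, hi, hid, -⟩ := hw
  simpa using (p.adj_getVert_succ (i := 0) (by omega)).symm

theorem adj_end_of_mem_walkInterior (hw : w ∈ walkInterior p) :
    G.Adj (p.getVert (p.length - 1)) v := by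
  obtain ⟨i, hi, hid, -⟩ := hw
  have hadj := p.adj_getVert_succ (i := p.length - 1) (by omega)
  rwa [Nat.sub_add_cancel (by omega), p.getVert_length] at hadj

theorem reachable_getVert_one_induce {s : Set V} (hs : walkInterior p ⊆ s)
    (h1 : p.getVert 1 ∈ s) (hw : w ∈ walkInterior p) :
    (G.induce s).Reachable ⟨p.getVert 1, h1⟩ ⟨w, hs hw⟩ := by
  obtain ⟨i, hi, hid, rfl⟩ := hw
  induction i, hi using Nat.le_induction with
  | base => exact .refl _
  | succ i hi ih =>
    have hadj : (G.induce s).Adj ⟨p.getVert i, hs ⟨i, hi, by omega, rfl⟩⟩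
        ⟨p.getVert (i + 1), hs ⟨i + 1, by omega, hid, rfl⟩⟩ := p.adj_getVert_succ (by omega)
    exact (ih (by omega)).trans hadj.reachable

namespace IsBareWalk

theorem mem_walkInterior_or_of_adj (hp : IsBareWalk p) (hw : w ∈ walkInterior p)
    (hadj : G.Adj w y) :
    y ∈ walkInterior p ∨ (w = p.getVert 1 ∧ y = u) ∨ (w = p.getVert (p.length - 1) ∧ y = v) := by
  obtain ⟨i, hi, hid, rfl⟩ := hw
  obtain ⟨i, rfl⟩ := Nat.exists_eq_add_of_le' hi
  rcases hp i (by omega) y hadj with rfl | rfl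
  · rcases i.eq_zero_or_pos with rfl | hpos
    · exact .inr (.inl ⟨rfl, p.getVert_zero⟩)
    · exact .inl ⟨i, hpos, by omega, rfl⟩
  · rcases (show i + 2 ≤ p.length by omega).eq_or_lt with hlast | hlt
    · exact .inr (.inr ⟨by rw [← hlast]; rfl, by rw [hlast, p.getVert_length]⟩)
    · exact .inl ⟨i + 2, by omega, by omega, rfl⟩

theorem adj_getVert_iff (hp : IsBareWalk p) (hpath : p.IsPath) {i j : ℕ} (hi : 1 ≤ i)
    (hid : i ≤ p.length - 1) (hj : j ≤ p.length) :
    G.Adj (p.getVert i) (p.getVert j) ↔ j = i + 1 ∨ i = j + 1 := by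
  obtain ⟨i, rfl⟩ := Nat.exists_eq_add_of_le' hi
  constructor
  · intro hadj
    rcases hp i (by omega) _ hadj with heq | heq
    · exact .inr (by rw [hpath.getVert_injOn hj (show i ≤ p.length by omega) heq])
    · exact .inl (hpath.getVert_injOn hj (show i + 2 ≤ p.length by omega) heq)
  · rintro (rfl | heq)
    · exact p.adj_getVert_succ (by omega)
    · rw [heq]
      exact (p.adj_getVert_succ (by omega)).symm

variable {s : Set V}

theorem image_supp_connectedComponentMk (hp : IsBareWalk p) (hu : u ∈ s) (hv : v ∈ s)
    (hs : walkInterior p ⊆ sᶜ) (h1 : p.getVert 1 ∈ sᶜ) :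
    Subtype.val '' ((G.induce sᶜ).connectedComponentMk ⟨p.getVert 1, h1⟩).supp =
      walkInterior p := by
  have hlen : 1 < p.length := by
    by_contra! hle
    exact h1 ((p.getVert_of_length_le hle).symm ▸ hv)
  have hsupp : ((G.induce sᶜ).connectedComponentMk ⟨p.getVert 1, h1⟩).supp =
      Subtype.val ⁻¹' walkInterior p := by
    refine supp_connectedComponentMk_eq ⟨1, le_rfl, by omega, rfl⟩ (fun x hx y hxy ↦ ?_)
      fun x hx ↦ reachable_getVert_one_induce hs h1 hx
    rcases hp.mem_walkInterior_or_of_adj hx hxy with hy | ⟨-, hy⟩ | ⟨-, hy⟩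
    · exact hy
    · exact (y.2 (hy.symm ▸ hu :)).elim
    · exact (y.2 (hy.symm ▸ hv :)).elim
  rw [hsupp, Subtype.image_preimage_coe, Set.inter_eq_right.2 hs]

theorem adj_iff_of_mem_walkInterior (hp : IsBareWalk p) (hs : walkInterior p ⊆ sᶜ)
    (hw : w ∈ walkInterior p) (hy : y ∈ s) :
    G.Adj w y ↔ (w = p.getVert 1 ∧ y = u) ∨ (w = p.getVert (p.length - 1) ∧ y = v) := by
  constructor
  · exact fun hadj ↦ (hp.mem_walkInterior_or_of_adj hw hadj).resolve_left fun hy' ↦ hs hy' hy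
  · rintro (⟨rfl, rfl⟩ | ⟨rfl, rfl⟩)
    · exact adj_start_of_mem_walkInterior hw
    · exact adj_end_of_mem_walkInterior hw

end IsBareWalk

end BareWalks

/-- A walk from an induced claw `J` to an induced triangle `T` that is no longer than the distance
between any induced claw and any induced triangle. It makes `(J, T)` a closest claw–triangle pair
and is itself a shortest walk between its endpoints. -/
structure IsClosestClawTriangleWalk {V : Type*} {G : SimpleGraph V} (J T : Set V) {u v : V}
    (p : G.Walk u v) : Prop where
  claw : Nonempty (clawGraph ≃g G.induce J)
  triangle : Nonempty (triangleGraph ≃g G.induce T)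
  start_mem : u ∈ J
  end_mem : v ∈ T
  length_le_eSetDist : ∀ J' T' : Set V, Nonempty (clawGraph ≃g G.induce J') →
    Nonempty (triangleGraph ≃g G.induce T') → p.length ≤ eSetDist G J' T'

namespace IsClosestClawTriangleWalk

variable {V : Type*} {G : SimpleGraph V} {J T : Set V} {u v : V} {p : G.Walk u v} {i : ℕ}

theorem length_le_length (hp : IsClosestClawTriangleWalk J T p) {J' T' : Set V}
    (hJ' : Nonempty (clawGraph ≃g G.induce J')) (hT' : Nonempty (triangleGraph ≃g G.induce T'))
    {a b : V} (ha : a ∈ J') (hb : b ∈ T') (q : G.Walk a b) : p.length ≤ q.length := by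
  have hle : (p.length : ℕ∞) ≤ q.length :=
    calc (p.length : ℕ∞) ≤ eSetDist G J' T' := hp.length_le_eSetDist J' T' hJ' hT'
      _ ≤ G.edist a b := eSetDist_le_edist_s7 G ha hb
      _ ≤ q.length := q.edist_le
  exact_mod_cast hle

theorem getVert_notMem_triangle (hp : IsClosestClawTriangleWalk J T p) {T' : Set V}
    (hT' : Nonempty (triangleGraph ≃g G.induce T')) (hi : i < p.length) : p.getVert i ∉ T' := by
  intro hmem
  have hle := hp.length_le_length hp.claw hT' hp.start_mem hmem (p.take i)
  rw [p.take_length] at hle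
  omega

theorem getVert_notMem_claw (hp : IsClosestClawTriangleWalk J T p) {J' : Set V}
    (hJ' : Nonempty (clawGraph ≃g G.induce J')) (hi : 0 < i) (hid : i ≤ p.length) :
    p.getVert i ∉ J' := by
  intro hmem
  have hle := hp.length_le_length hJ' hp.triangle hmem hp.end_mem (p.drop i)
  rw [p.drop_length] at hle
  omega

theorem isPath (hp : IsClosestClawTriangleWalk J T p) : p.IsPath :=
  isPath_of_length_le_edist p <|
    (hp.length_le_eSetDist J T hp.claw hp.triangle).trans
      (eSetDist_le_edist_s7 G hp.start_mem hp.end_mem)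

theorem walkInterior_subset_compl (hp : IsClosestClawTriangleWalk J T p) :
    walkInterior p ⊆ (J ∪ T)ᶜ := by
  rintro _ ⟨i, hi, hid, rfl⟩ (hJ | hT)
  · exact hp.getVert_notMem_claw hp.claw hi (by omega) hJ
  · exact hp.getVert_notMem_triangle hp.triangle (by omega) hT

theorem not_adj_of_adj_getVert (hp : IsClosestClawTriangleWalk J T p) (hi : i < p.length) {a b : V}
    (ha : G.Adj (p.getVert i) a) (hb : G.Adj (p.getVert i) b) : ¬G.Adj a b := fun hab ↦
  hp.getVert_notMem_triangle (nonempty_triangleGraph_iso_induce ha hb hab) hi (by simp)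

theorem isBareWalk (hp : IsClosestClawTriangleWalk J T p) : IsBareWalk p := by
  intro i hi w hw
  by_contra! hne
  have hpred : G.Adj (p.getVert i) (p.getVert (i + 1)) := p.adj_getVert_succ (by omega)
  have hsucc : G.Adj (p.getVert (i + 1)) (p.getVert (i + 2)) := p.adj_getVert_succ (by omega)
  have hpred_ne_succ : p.getVert i ≠ p.getVert (i + 2) := fun heq ↦ by
    have := hp.isPath.getVert_injOn (show i ≤ p.length by omega) hi heq
    omega
  have hpred_succ : ¬G.Adj (p.getVert i) (p.getVert (i + 2)) := fun hadj ↦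
    hp.not_adj_of_adj_getVert (by omega) hpred hadj hsucc
  have hpred_w : ¬G.Adj (p.getVert i) w := fun hadj ↦
    hp.not_adj_of_adj_getVert (by omega) hpred hadj hw
  have hsucc_w : ¬G.Adj (p.getVert (i + 2)) w :=
    hp.not_adj_of_adj_getVert (by omega) hsucc hw
  have hclaw := nonempty_clawGraph_iso_induce hpred.symm hsucc hw hpred_ne_succ hne.1.symm
    hne.2.symm hpred_succ hpred_w hsucc_w
  exact hp.getVert_notMem_claw hclaw i.succ_pos (by omega) (by simp)

end IsClosestClawTriangleWalk

theorem stmt7_general {V : Type*} (G : SimpleGraph V) (Js Ts : Set V)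
    (hJ : Nonempty (clawGraph ≃g G.induce Js))
    (hT : Nonempty (triangleGraph ≃g G.induce Ts))
    (u v : V) (hu : u ∈ Js) (hv : v ∈ Ts) (p : G.Walk u v)
    (hclosest : ∀ J T : Set V, Nonempty (clawGraph ≃g G.induce J) →
      Nonempty (triangleGraph ≃g G.induce T) → eSetDist G J T < ⊤ →
      (p.length : ℕ∞) ≤ eSetDist G J T)
    (hx1 : p.getVert 1 ∈ (Js ∪ Ts)ᶜ) :
    (Subtype.val ''
        ((G.induce (Js ∪ Ts)ᶜ).connectedComponentMk ⟨p.getVert 1, hx1⟩).supp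
      = {w : V | ∃ i, 1 ≤ i ∧ i ≤ p.length - 1 ∧ w = p.getVert i}) ∧
    (∀ i j, 1 ≤ i → i ≤ p.length - 1 → 1 ≤ j → j ≤ p.length - 1 →
        (G.Adj (p.getVert i) (p.getVert j) ↔ (j = i + 1 ∨ i = j + 1))) ∧
    (∀ w ∈ Subtype.val ''
        ((G.induce (Js ∪ Ts)ᶜ).connectedComponentMk ⟨p.getVert 1, hx1⟩).supp,
      ∀ y ∈ Js ∪ Ts,
        (G.Adj w y ↔
          ((w = p.getVert 1 ∧ y = u) ∨ (w = p.getVert (p.length - 1) ∧ y = v)))) := by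
  have hp : IsClosestClawTriangleWalk Js Ts p :=
    { claw := hJ
      triangle := hT
      start_mem := hu
      end_mem := hv
      length_le_eSetDist := fun J T hJ' hT' ↦
        (lt_or_eq_of_le le_top).elim (hclosest J T hJ' hT') fun htop ↦ htop ▸ le_top }
  have hcomponent := hp.isBareWalk.image_supp_connectedComponentMk (.inl hu) (.inr hv)
    hp.walkInterior_subset_compl hx1
  refine ⟨hcomponent, fun i j hi hid _ hjd ↦ ?_, fun w hw y hy ↦ ?_⟩
  · exact hp.isBareWalk.adj_getVert_iff hp.isPath hi hid (by omega)
  · exact hp.isBareWalk.adj_iff_of_mem_walkInterior hp.walkInterior_subset_compl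
      (hcomponent ▸ hw) hy

theorem stmt7 {V : Type} [Fintype V] (G : SimpleGraph V) (Js Ts : Set V)
    (hJ : Nonempty (clawGraph ≃g G.induce Js))
    (hT : Nonempty (triangleGraph ≃g G.induce Ts))
    (d : ℕ) (hd : eSetDist G Js Ts = (d : ℕ∞)) (hd2 : 2 ≤ d)
    (hclosest : ∀ J T : Set V, Nonempty (clawGraph ≃g G.induce J) →
      Nonempty (triangleGraph ≃g G.induce T) → eSetDist G J T < ⊤ →
      (d : ℕ∞) ≤ eSetDist G J T)
    (u v : V) (hu : u ∈ Js) (hv : v ∈ Ts)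
    (p : G.Walk u v) (hp : p.IsPath) (hlen : p.length = d)
    (hx1 : p.getVert 1 ∈ (Js ∪ Ts)ᶜ) :
    (Subtype.val ''
        ((G.induce (Js ∪ Ts)ᶜ).connectedComponentMk ⟨p.getVert 1, hx1⟩).supp
      = {w : V | ∃ i, 1 ≤ i ∧ i ≤ d - 1 ∧ w = p.getVert i}) ∧
    (∀ i j, 1 ≤ i → i ≤ d - 1 → 1 ≤ j → j ≤ d - 1 →
        (G.Adj (p.getVert i) (p.getVert j) ↔ (j = i + 1 ∨ i = j + 1))) ∧
    (∀ w ∈ Subtype.val ''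
        ((G.induce (Js ∪ Ts)ᶜ).connectedComponentMk ⟨p.getVert 1, hx1⟩).supp,
      ∀ y ∈ Js ∪ Ts,
        (G.Adj w y ↔ ((w = p.getVert 1 ∧ y = u) ∨ (w = p.getVert (d - 1) ∧ y = v)))) := by
  subst hlen
  exact stmt7_general G Js Ts hJ hT u v hu hv p hclosest hx1
end

section
/- Let F1 and F2 be families of connected graphs, let i ∈ {1,2}, let G be a graph, and let C be a connected component of G containing no induced subgraph isomorphic to any member of F_i \ sp(F1,F2). Let m be the minimum cardinality of a set X ⊆ V(C) such that C − X is F_i-free. Then for every integer k ≥ 0 the following are equivalent: (1) there exists S ⊆ V(G) with |S| ≤ k such that every connected component of G − S is F1-free or F2-free; (2) m ≤ k and there exists S' ⊆ V(G) \ V(C) with |S'| ≤ k − m such that every connected component of (G − V(C)) − S' is F1-free or F2-free. -/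
open SimpleGraph

/-- Every connected component of `G` is `F1`-free or `F2`-free. -/
def ComponentsOK {V : Type*} (G : SimpleGraph V) (F1 F2 : Set GraphSig) : Prop :=
  ∀ c : G.ConnectedComponent, FamFree (G.induce c.supp) F1 ∨ FamFree (G.induce c.supp) F2

/-!
A connected induced subgraph of `G` lies in one component of `G`, so if every component of `G` is
`F1`-free or `F2`-free, then so is every connected induced subgraph. A member of `sp(F1, F2)` is
neither `F1`-free nor `F2`-free, so if connected it does not occur in such a `G`. Now let `S` be a
solution for `G` and `C` a union of components without members of `Fi \ sp(F1, F2)`. Then `C - S`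
contains no member of `Fi` at all, so `S` spends at least `m` vertices inside `C`, and `S \ C`
solves the rest. Conversely, as no edge leaves `C`, an optimal `Fi`-deletion set of `C` can be added
to any solution of `G - C`.
-/

section

variable {V W : Type*} {G : SimpleGraph V} {H : SimpleGraph W} {F F1 F2 : Set GraphSig}

lemma FamFree.of_embedding (hG : FamFree G F) (f : H ↪g G) : FamFree H F :=
  fun K hK ⟨g⟩ => hG K hK ⟨g.trans f⟩

lemma not_famFree_of_mem {K : GraphSig} (hK : K ∈ F) : ¬ FamFree K.2 F :=
  fun hfree => hfree K hK ⟨Embedding.refl⟩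

lemma not_famFree_of_mem_spFamily {K : GraphSig} (hK : K ∈ spFamily F1 F2) :
    ¬ FamFree K.2 F1 ∧ ¬ FamFree K.2 F2 := by
  rcases hK with ⟨hK₁, L, hL, hKL⟩ | ⟨hK₂, L, hL, hKL⟩
  · exact ⟨not_famFree_of_mem hK₁, fun hfree => hfree L hL hKL⟩
  · exact ⟨fun hfree => hfree L hL hKL, not_famFree_of_mem hK₂⟩

lemma ComponentsOK.famFree_or_famFree (hG : ComponentsOK G F1 F2) (hH : H.Connected)
    (f : H ↪g G) : FamFree H F1 ∨ FamFree H F2 := by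
  obtain ⟨w₀⟩ := hH.nonempty
  let d := G.connectedComponentMk (f w₀)
  have range_subset : ∀ w, f w ∈ d.supp := fun w =>
    ConnectedComponent.sound ((hH.preconnected w w₀).map f.toHom)
  let g : H ↪g G.induce d.supp := f.codRestrict d.supp range_subset
  exact (hG d).imp (·.of_embedding g) (·.of_embedding g)

lemma ComponentsOK.of_embedding (hG : ComponentsOK G F1 F2) (f : H ↪g G) :
    ComponentsOK H F1 F2 :=
  fun d => hG.famFree_or_famFree d.connected_toSimpleGraph ((Embedding.induce d.supp).trans f)

lemma FamFree.componentsOK (hG : FamFree G F) (hF : F = F1 ∨ F = F2) : ComponentsOK G F1 F2 := by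
  intro d
  have hd : FamFree (G.induce d.supp) F := hG.of_embedding (Embedding.induce d.supp)
  rcases hF with rfl | rfl
  exacts [.inl hd, .inr hd]

lemma ComponentsOK.famFree (hG : ComponentsOK G F1 F2) (hF : ∀ K ∈ F, K.2.Connected)
    (hfree : FamFree G (F \ spFamily F1 F2)) : FamFree G F := by
  rintro K hK ⟨f⟩
  have hsp : K ∈ spFamily F1 F2 := by
    by_contra hn
    exact hfree K ⟨hK, hn⟩ ⟨f⟩
  obtain ⟨not_free₁, not_free₂⟩ := not_famFree_of_mem_spFamily hsp
  exact (hG.famFree_or_famFree (hF K hK) f).elim not_free₁ not_free₂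

lemma mem_of_reachable_of_forall_adj {A : Set V} (hA : ∀ ⦃u v⦄, G.Adj u v → u ∈ A → v ∈ A)
    {u v : V} (huv : G.Reachable u v) (hu : u ∈ A) : v ∈ A := by
  rw [reachable_iff_reflTransGen] at huv
  induction huv with
  | refl => exact hu
  | tail _ hadj ih => exact hA hadj ih

lemma connectedComponent_supp_subset_or_subset {A B : Set V}
    (hAB : ∀ a ∈ A, ∀ b ∈ B, ¬ G.Adj a b) (d : (G.induce (A ∪ B)).ConnectedComponent) :
    (∀ v ∈ d.supp, v.1 ∈ A) ∨ ∀ v ∈ d.supp, v.1 ∈ B := by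
  have adj_closed : ∀ ⦃u v : ↥(A ∪ B)⦄, (G.induce (A ∪ B)).Adj u v →
      u ∈ Subtype.val ⁻¹' A → v ∈ Subtype.val ⁻¹' A :=
    fun u v huv hu => v.2.resolve_right fun hv => hAB u hu v hv huv
  by_cases hd : ∃ u ∈ d.supp, u.1 ∈ A
  · obtain ⟨u, hud, huA⟩ := hd
    exact .inl fun v hvd =>
      mem_of_reachable_of_forall_adj adj_closed (d.reachable_of_mem_supp hud hvd) huA
  · exact .inr fun v hvd => v.2.resolve_left fun hvA => hd ⟨v, hvd, hvA⟩

lemma ComponentsOK.union {A B : Set V} (hA : ComponentsOK (G.induce A) F1 F2)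
    (hB : ComponentsOK (G.induce B) F1 F2) (hAB : ∀ a ∈ A, ∀ b ∈ B, ¬ G.Adj a b) :
    ComponentsOK (G.induce (A ∪ B)) F1 F2 := by
  intro d
  let f : (G.induce (A ∪ B)).induce d.supp ↪g G :=
    (Embedding.induce d.supp).trans (Embedding.induce (A ∪ B))
  rcases connectedComponent_supp_subset_or_subset hAB d with hdA | hdB
  · exact hA.famFree_or_famFree d.connected_toSimpleGraph (f.codRestrict A fun v => hdA v v.2)
  · exact hB.famFree_or_famFree d.connected_toSimpleGraph (f.codRestrict B fun v => hdB v v.2)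

end

section

variable {V : Type*} {G : SimpleGraph V} {F F1 F2 : Set GraphSig} {C S S' X : Set V}

lemma ComponentsOK.famFree_sdiff_inter (hS : ComponentsOK (G.induce Sᶜ) F1 F2)
    (hF : ∀ K ∈ F, K.2.Connected) (hC : FamFree (G.induce C) (F \ spFamily F1 F2)) :
    FamFree (G.induce (C \ (S ∩ C))) F :=
  have subset_compl : C \ (S ∩ C) ⊆ Sᶜ := fun _ hv hvS => hv.2 ⟨hvS, hv.1⟩
  (hS.of_embedding (G.induceHomOfLE subset_compl)).famFree hF
    (hC.of_embedding (G.induceHomOfLE Set.sdiff_subset))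

lemma ComponentsOK.compl_sdiff_sdiff (hS : ComponentsOK (G.induce Sᶜ) F1 F2) :
    ComponentsOK (G.induce (Cᶜ \ (S \ C))) F1 F2 :=
  have subset_compl : Cᶜ \ (S \ C) ⊆ Sᶜ := fun _ hv hvS => hv.2 ⟨hvS, hv.1⟩
  hS.of_embedding (G.induceHomOfLE subset_compl)

lemma ComponentsOK.compl_union (hadj : ∀ ⦃u v⦄, G.Adj u v → (u ∈ C ↔ v ∈ C))
    (hX : ComponentsOK (G.induce (C \ X)) F1 F2)
    (hS' : ComponentsOK (G.induce (Cᶜ \ S')) F1 F2) :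
    ComponentsOK (G.induce (X ∪ S')ᶜ) F1 F2 := by
  have subset_union : (X ∪ S')ᶜ ⊆ (C \ X) ∪ (Cᶜ \ S') := by
    intro v hv
    by_cases hvC : v ∈ C
    · exact .inl ⟨hvC, fun hvX => hv (.inl hvX)⟩
    · exact .inr ⟨hvC, fun hvS' => hv (.inr hvS')⟩
  have not_adj : ∀ a ∈ C \ X, ∀ b ∈ Cᶜ \ S', ¬ G.Adj a b :=
    fun a ha b hb hab => hb.1 ((hadj hab).1 ha.1)
  exact (hX.union hS' not_adj).of_embedding (G.induceHomOfLE subset_union)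

end

/-- Here `C` is any union of components of `G`, which is what `hadj` expresses. The vertex set may
be infinite, so sizes are measured by `Set.encard`: `Set.ncard` is `0` on infinite sets. -/
theorem stmt10_general {V : Type*} {G : SimpleGraph V} {F1 F2 Fi : Set GraphSig} {C : Set V}
    {m : ℕ∞} (hFi : ∀ H ∈ Fi, H.2.Connected) (hi : Fi = F1 ∨ Fi = F2)
    (hadj : ∀ ⦃u v⦄, G.Adj u v → (u ∈ C ↔ v ∈ C))
    (hC : FamFree (G.induce C) (Fi \ spFamily F1 F2))
    (hm_ex : ∃ X : Set V, X ⊆ C ∧ FamFree (G.induce (C \ X)) Fi ∧ X.encard = m)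
    (hm_min : ∀ X : Set V, X ⊆ C → FamFree (G.induce (C \ X)) Fi → m ≤ X.encard) (k : ℕ) :
    (∃ S : Set V, S.encard ≤ k ∧ ComponentsOK (G.induce Sᶜ) F1 F2) ↔
      (m ≤ k ∧ ∃ S' : Set V, S' ⊆ Cᶜ ∧ S'.encard ≤ k - m ∧
        ComponentsOK (G.induce (Cᶜ \ S')) F1 F2) := by
  constructor
  · rintro ⟨S, hSk, hS⟩
    have m_le : m ≤ (S ∩ C).encard :=
      hm_min _ Set.inter_subset_right (hS.famFree_sdiff_inter hFi hC)
    have add_le : m + (S \ C).encard ≤ k := calc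
      m + (S \ C).encard ≤ (S ∩ C).encard + (S \ C).encard := by gcongr
      _ = S.encard := by rw [add_comm, Set.encard_sdiff_add_encard_inter]
      _ ≤ k := hSk
    have m_le_k : m ≤ k := le_self_add.trans add_le
    have m_ne_top : m ≠ ⊤ := ne_top_of_le_ne_top (ENat.natCast_ne_top k) m_le_k
    exact ⟨m_le_k, S \ C, fun _ hv => hv.2, ENat.le_sub_of_add_le_left m_ne_top add_le,
      hS.compl_sdiff_sdiff⟩
  · rintro ⟨m_le_k, S', -, hS'k, hS'⟩
    obtain ⟨X, -, hX, rfl⟩ := hm_ex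
    have encard_le : (X ∪ S').encard ≤ k := calc
      (X ∪ S').encard ≤ X.encard + S'.encard := Set.encard_union_le X S'
      _ ≤ X.encard + (k - X.encard) := by gcongr
      _ = k := add_tsub_cancel_of_le m_le_k
    exact ⟨X ∪ S', encard_le, (hX.componentsOK hi).compl_union hadj hS'⟩

theorem stmt10 (F1 F2 : Set GraphSig)
    (hF1 : ∀ H ∈ F1, H.2.Connected) (hF2 : ∀ H ∈ F2, H.2.Connected)
    (Fi : Set GraphSig) (hi : Fi = F1 ∨ Fi = F2)
    {V : Type} [Fintype V] (G : SimpleGraph V) (c : G.ConnectedComponent)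
    (hc : FamFree (G.induce c.supp) (Fi \ spFamily F1 F2))
    (m : ℕ)
    (hm_ex : ∃ X : Set V, X ⊆ c.supp ∧
        FamFree (G.induce (c.supp \ X)) Fi ∧ X.ncard = m)
    (hm_min : ∀ X : Set V, X ⊆ c.supp →
        FamFree (G.induce (c.supp \ X)) Fi → m ≤ X.ncard)
    (k : ℕ) :
    (∃ S : Set V, S.ncard ≤ k ∧ ComponentsOK (G.induce Sᶜ) F1 F2) ↔
      (m ≤ k ∧ ∃ S' : Set V, S' ⊆ c.suppᶜ ∧ S'.ncard ≤ k - m ∧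
        ComponentsOK (G.induce (c.suppᶜ \ S')) F1 F2) := by
  have hFi : ∀ H ∈ Fi, H.2.Connected := hi.elim (fun h => h ▸ hF1) (fun h => h ▸ hF2)
  have hcard (S : Set V) : S.encard = S.ncard := S.toFinite.cast_ncard_eq.symm
  simpa only [hcard, ← ENat.natCast_sub, Nat.cast_le] using
    stmt10_general (m := m) hFi hi (fun _ _ => c.mem_supp_congr_adj) hc
      (by simpa only [hcard, Nat.cast_inj] using hm_ex)
      (by simpa only [hcard, Nat.cast_le] using hm_min) k
end

section
/- Let G be a graph containing no induced cycle C_j for any 4 ≤ j ≤ 10. Let J* ⊆ V(G) with G[J*] isomorphic to the long-claw and T* ⊆ V(G) with G[T*] isomorphic to the triangle K_3, such that d := d_G(J*,T*) is finite and (J*,T*) is a closest long-claw–triangle pair: for all J, T ⊆ V(G) with G[J] isomorphic to the long-claw, G[T] isomorphic to K_3 and d_G(J,T) finite, one has d ≤ d_G(J,T). Assume d ≥ 2 and let P* = x_0 x_1 ⋯ x_d be a shortest path in G with x_0 = u ∈ J* and x_d = v ∈ T*. Let C be the connected component of G − (J* ∪ T*) containing x_1. Then: (a) {x_1,…,x_{d−1}}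 ⊆ V(C), and every vertex of V(C) \ {x_1,…,x_{d−1}} has exactly one neighbor in G, and that neighbor belongs to {x_1,…,x_{d−1}} (so C is a caterpillar with spine x_1 ⋯ x_{d−1}); (b) the only edges of G between V(C) and J* ∪ T* are {u, x_1} and {x_{d−1}, v}. -/
open SimpleGraph

/-- The long-claw: center `0`, middle vertices `1`, `2`, `3`, and
leaves `4`, `5`, `6` with edges `0-i` and `i-(i+3)` for `i = 1, 2, 3`. -/
def longClawGraph : SimpleGraph (Fin 7) :=
  SimpleGraph.fromEdgeSet {s(0, 1), s(0, 2), s(0, 3), s(1, 4), s(2, 5), s(3, 6)}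

/-!
Call `b, a` an arm at a vertex `c` if `c, b, a` is a walk with `a ≠ c`. If `c` lies in no triangle
and there are no induced `C₄` and `C₅`, then two arms at `c` with distinct first vertices send no
edges to each other, so three such arms form a long-claw centred at `c`.

An interior vertex `xᵢ` of the path lies in no triangle and is the centre of no long-claw, as
either would be at distance less than `d` from `J*` or `T*`. Both neighbours of `xᵢ` on the path
start an arm at `xᵢ`; at the ends of the path this arm stays inside `J*` or `T*`. Hence no further
neighbour of `xᵢ` starts an arm, i.e. each of them is pendant. As no vertex of `J* ∪ T*` is pendant,
this determines the component of `x₁` and all edges leaving it.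
-/

section InducedSubgraphs

variable {V W : Type*} {G : SimpleGraph V} {H : SimpleGraph W}

theorem injective_of_adj_iff {g : W → V} (hH : Function.Injective H.neighborSet)
    (hg : ∀ i j, G.Adj (g i) (g j) ↔ H.Adj i j) : Function.Injective g := by
  refine fun i j hij ↦ hH (Set.ext fun k ↦ ?_)
  rw [mem_neighborSet, mem_neighborSet, ← hg, ← hg, hij]

theorem neighborSet_injective_cycleGraph_five : Function.Injective (cycleGraph 5).neighborSet := by
  simp only [Function.Injective, Set.ext_iff, mem_neighborSet]
  decide

instance : DecidableRel longClawGraph.Adj := fun i j ↦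
  decidable_of_iff' _ (by rw [longClawGraph, fromEdgeSet_adj, Set.mem_insert_iff])

theorem neighborSet_injective_longClawGraph : Function.Injective longClawGraph.neighborSet := by
  simp only [Function.Injective, Set.ext_iff, mem_neighborSet]
  decide

theorem containsInduced_cycleGraph_four {a b c e : V} (hab : G.Adj a b) (hbc : G.Adj b c)
    (hce : G.Adj c e) (hea : G.Adj e a) (hac : ¬ G.Adj a c) (hbe : ¬ G.Adj b e)
    (hac_ne : a ≠ c) (hbe_ne : b ≠ e) : ContainsInduced G (cycleGraph 4) := by
  have hinj : Function.Injective ![a, b, c, e] := by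
    intro i j hij
    fin_cases i <;> fin_cases j <;> simp_all
  have hadj : ∀ i j, G.Adj (![a, b, c, e] i) (![a, b, c, e] j) ↔ (cycleGraph 4).Adj i j := by
    intro i j
    fin_cases i <;> fin_cases j <;> simp_all +decide [G.adj_comm]
  exact ⟨⟨⟨_, hinj⟩, hadj _ _⟩⟩

theorem containsInduced_cycleGraph_five {a b c e f : V} (hab : G.Adj a b) (hbc : G.Adj b c)
    (hce : G.Adj c e) (hef : G.Adj e f) (hfa : G.Adj f a) (hac : ¬ G.Adj a c) (hbe : ¬ G.Adj b e)
    (hcf : ¬ G.Adj c f) (hea : ¬ G.Adj e a) (hfb : ¬ G.Adj f b) :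
    ContainsInduced G (cycleGraph 5) := by
  have hadj : ∀ i j, G.Adj (![a, b, c, e, f] i) (![a, b, c, e, f] j) ↔ (cycleGraph 5).Adj i j := by
    intro i j
    fin_cases i <;> fin_cases j <;> simp_all +decide [G.adj_comm]
  exact ⟨⟨⟨_, injective_of_adj_iff neighborSet_injective_cycleGraph_five hadj⟩, hadj _ _⟩⟩

theorem exists_triangleGraph_embedding {a b c : V} (hab : G.Adj a b) (hac : G.Adj a c)
    (hbc : G.Adj b c) : ∃ e : triangleGraph ↪g G, e 0 = a := by
  have hadj : ∀ i j, G.Adj (![a, b, c] i) (![a, b, c] j) ↔ i ≠ j := by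
    intro i j
    fin_cases i <;> fin_cases j <;> simp [hab, hac, hbc, G.adj_comm]
  have hinj : Function.Injective ![a, b, c] := fun i j hij ↦
    not_imp_comm.1 (hadj i j).2 (hij ▸ G.irrefl)
  exact ⟨⟨⟨_, hinj⟩, hadj _ _⟩, rfl⟩

theorem exists_longClawGraph_embedding {c : V} {b a : Fin 3 → V} (hcb : ∀ i, G.Adj c (b i))
    (hba : ∀ i, G.Adj (b i) (a i)) (hca : ∀ i, ¬ G.Adj c (a i))
    (hbb : ∀ i j, i ≠ j → ¬ G.Adj (b i) (b j)) (hba_ne : ∀ i j, i ≠ j → ¬ G.Adj (b i) (a j))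
    (haa : ∀ i j, i ≠ j → ¬ G.Adj (a i) (a j)) : ∃ e : longClawGraph ↪g G, e 0 = c := by
  have hab_ne : ∀ i j, i ≠ j → ¬ G.Adj (a i) (b j) := fun i j hij hab ↦ hba_ne j i hij.symm hab.symm
  have hadj : ∀ i j, G.Adj (![c, b 0, b 1, b 2, a 0, a 1, a 2] i)
      (![c, b 0, b 1, b 2, a 0, a 1, a 2] j) ↔ longClawGraph.Adj i j := by
    intro i j
    fin_cases i <;> fin_cases j <;>
      simp [longClawGraph, G.adj_comm, hcb, hba, hca, hbb, hba_ne, hab_ne, haa]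
  exact ⟨⟨⟨_, injective_of_adj_iff neighborSet_injective_longClawGraph hadj⟩, hadj _ _⟩, rfl⟩

theorem exists_adj_of_iso_induce {J : Set V} (e : H ≃g G.induce J) (hH : ∀ i, ∃ j, H.Adj i j)
    {y : V} (hy : y ∈ J) : ∃ z ∈ J, G.Adj y z := by
  obtain ⟨j, hj⟩ := hH (e.symm ⟨y, hy⟩)
  refine ⟨e j, (e j).2, ?_⟩
  simpa using e.map_adj_iff.2 hj

end InducedSubgraphs

section Arms

variable {V : Type*} {G : SimpleGraph V} {c b a b' a' : V}

/-- The vertices `b, a` form an arm at `c`: the walk `c, b, a` is a path. Arms are the pieces from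
which a long-claw centred at `c` is assembled. -/
structure IsArm (G : SimpleGraph V) (c b a : V) : Prop where
  adj_center : G.Adj c b
  adj_leaf : G.Adj b a
  leaf_ne : a ≠ c

theorem IsArm.not_adj_center_leaf (h : IsArm G c b a) (hN : G.IsIndepSet (G.neighborSet c)) :
    ¬ G.Adj c a :=
  fun hca ↦ hN h.adj_center hca h.adj_leaf.ne h.adj_leaf

theorem IsArm.not_adj_first_leaf (hC4 : ¬ ContainsInduced G (cycleGraph 4)) (h : IsArm G c b a)
    (hN : G.IsIndepSet (G.neighborSet c)) (hcb : G.Adj c b') (hne : b ≠ b') : ¬ G.Adj b' a :=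
  fun hba ↦ hC4 <| containsInduced_cycleGraph_four h.adj_center h.adj_leaf hba.symm hcb.symm
    (h.not_adj_center_leaf hN) (hN h.adj_center hcb hne) h.leaf_ne.symm hne

theorem IsArm.not_adj_leaf_leaf (hC4 : ¬ ContainsInduced G (cycleGraph 4))
    (hC5 : ¬ ContainsInduced G (cycleGraph 5)) (h : IsArm G c b a) (h' : IsArm G c b' a')
    (hN : G.IsIndepSet (G.neighborSet c)) (hne : b ≠ b') : ¬ G.Adj a a' :=
  fun haa ↦ hC5 <| containsInduced_cycleGraph_five h.adj_center h.adj_leaf haa h'.adj_leaf.symm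
    h'.adj_center.symm (h.not_adj_center_leaf hN)
    (h'.not_adj_first_leaf hC4 hN h.adj_center hne.symm)
    (fun hab ↦ h.not_adj_first_leaf hC4 hN h'.adj_center hne hab.symm)
    (fun hac ↦ h'.not_adj_center_leaf hN hac.symm) (hN h'.adj_center h.adj_center hne.symm)

theorem exists_longClawGraph_embedding_of_isArm (hC4 : ¬ ContainsInduced G (cycleGraph 4))
    (hC5 : ¬ ContainsInduced G (cycleGraph 5)) (hN : G.IsIndepSet (G.neighborSet c))
    {b a : Fin 3 → V} (hb : Function.Injective b) (h : ∀ i, IsArm G c (b i) (a i)) :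
    ∃ e : longClawGraph ↪g G, e 0 = c :=
  exists_longClawGraph_embedding (fun i ↦ (h i).adj_center) (fun i ↦ (h i).adj_leaf)
    (fun i ↦ (h i).not_adj_center_leaf hN)
    (fun i j hij ↦ hN (h i).adj_center (h j).adj_center (hb.ne hij))
    (fun i j hij ↦ (h j).not_adj_first_leaf hC4 hN (h i).adj_center (hb.ne hij.symm))
    (fun i j hij ↦ (h i).not_adj_leaf_leaf hC4 hC5 (h j) hN (hb.ne hij))

end Arms

section Distance

variable {V W : Type*} {G : SimpleGraph V} {H : SimpleGraph W} {P Q : Set V} {u v : V}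

theorem eSetDist_comm (G : SimpleGraph V) (P Q : Set V) : eSetDist G P Q = eSetDist G Q P := by
  rw [eSetDist, iInf₂_comm]
  simp_rw [G.edist_comm, eSetDist]

theorem eSetDist_le_length (hu : u ∈ P) (hv : v ∈ Q) (q : G.Walk u v) :
    eSetDist G P Q ≤ q.length :=
  (iInf₂_le_of_le u hu (iInf₂_le v hv)).trans q.edist_le

theorem getVert_notMem_union (hu : u ∈ P) (hv : v ∈ Q) {p : G.Walk u v}
    (hp : p.length ≤ eSetDist G P Q) {i : ℕ} (hi₀ : 0 < i) (hi : i < p.length) :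
    p.getVert i ∉ P ∪ Q := by
  rintro (hP | hQ)
  · have := hp.trans (eSetDist_le_length hP hv (p.drop i))
    rw [Walk.drop_length, Nat.cast_le] at this
    omega
  · have := hp.trans (eSetDist_le_length hu hQ (p.take i))
    rw [Walk.take_length, Nat.cast_le] at this
    omega

theorem le_length_of_embedding {d : ℕ}
    (hd : ∀ P, Nonempty (H ≃g G.induce P) → eSetDist G P Q < ⊤ → d ≤ eSetDist G P Q)
    (e : H ↪g G) {k : W} (hu : e k = u) (hv : v ∈ Q) (q : G.Walk u v) : d ≤ q.length := by
  have hq := eSetDist_le_length (P := Set.range e) ⟨k, hu⟩ hv q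
  exact_mod_cast (hd _ ⟨e.isoInduceRange⟩ (hq.trans_lt (ENat.natCast_lt_top _))).trans hq

theorem isIndepSet_neighborSet_of_length_lt {d : ℕ}
    (hd : ∀ P, Nonempty (triangleGraph ≃g G.induce P) → eSetDist G P Q < ⊤ → d ≤ eSetDist G P Q)
    (hv : v ∈ Q) (q : G.Walk u v) (hq : q.length < d) : G.IsIndepSet (G.neighborSet u) := by
  intro b hb c hc _ hbc
  obtain ⟨e, he⟩ := exists_triangleGraph_embedding hb hc hbc
  exact hq.not_ge (le_length_of_embedding hd e he hv q)

end Distance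

section Spine

variable {V : Type*} {G : SimpleGraph V} {K : Set V} {u v : V} {p : G.Walk u v} {i : ℕ}

/-- The interior vertices of the walk `p` form the spine of a caterpillar: each of their neighbours,
other than the predecessor and the successor on `p`, is pendant. -/
def IsCaterpillarSpine (p : G.Walk u v) : Prop :=
  ∀ i, 0 < i → i < p.length → ∀ w, G.Adj (p.getVert i) w →
    w = p.getVert (i - 1) ∨ w = p.getVert (i + 1) ∨ G.neighborSet w = {p.getVert i}

theorem exists_isArm_getVert_add_one (hp : p.IsPath) (hv : v ∈ K)
    (hK : ∀ y ∈ K, ∃ z ∈ K, G.Adj y z) (hi : i < p.length) (hiK : p.getVert i ∉ K) :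
    ∃ a, IsArm G (p.getVert i) (p.getVert (i + 1)) a := by
  have hadj := p.adj_getVert_succ hi
  obtain hlast | hlt : i + 1 = p.length ∨ i + 1 < p.length := by omega
  · have hmem : p.getVert (i + 1) ∈ K := by rwa [hlast, p.getVert_length]
    obtain ⟨z, hzK, hz⟩ := hK _ hmem
    exact ⟨z, hadj, hz, ne_of_mem_of_not_mem hzK hiK⟩
  · refine ⟨p.getVert (i + 2), hadj, p.adj_getVert_succ hlt, fun heq ↦ ?_⟩
    have := hp.getVert_injOn hlt hi.le heq
    omega

theorem exists_isArm_getVert_sub_one (hp : p.IsPath) (hu : u ∈ K)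
    (hK : ∀ y ∈ K, ∃ z ∈ K, G.Adj y z) (hi₀ : 0 < i) (hi : i < p.length)
    (hiK : p.getVert i ∉ K) : ∃ a, IsArm G (p.getVert i) (p.getVert (i - 1)) a := by
  have hrev : p.reverse.getVert (p.length - i) = p.getVert i := by
    rw [p.getVert_reverse, Nat.sub_sub_self hi.le]
  have hrev_succ : p.reverse.getVert (p.length - i + 1) = p.getVert (i - 1) := by
    rw [p.getVert_reverse]
    congr 1
    omega
  rw [← hrev] at hiK ⊢
  rw [← hrev_succ]
  exact exists_isArm_getVert_add_one hp.reverse hu hK (by rw [p.length_reverse]; omega) hiK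

theorem isCaterpillarSpine_of_isPath (hC4 : ¬ ContainsInduced G (cycleGraph 4))
    (hC5 : ¬ ContainsInduced G (cycleGraph 5)) (hp : p.IsPath) (hu : u ∈ K) (hv : v ∈ K)
    (hK : ∀ y ∈ K, ∃ z ∈ K, G.Adj y z) (hpK : ∀ i, 0 < i → i < p.length → p.getVert i ∉ K)
    (hN : ∀ i, 0 < i → i < p.length → G.IsIndepSet (G.neighborSet (p.getVert i)))
    (hclaw : ∀ i, 0 < i → i < p.length → ∀ e : longClawGraph ↪g G, e 0 ≠ p.getVert i) :
    IsCaterpillarSpine p := by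
  intro i hi₀ hi w hw
  by_contra! ⟨hpred, hsucc, hpendant⟩
  obtain ⟨y, hy, hyne⟩ : ∃ y, G.Adj w y ∧ y ≠ p.getVert i := by
    by_contra! hunique
    exact hpendant (Set.eq_singleton_iff_unique_mem.2 ⟨hw.symm, hunique⟩)
  obtain ⟨a, ha⟩ := exists_isArm_getVert_sub_one hp hu hK hi₀ hi (hpK i hi₀ hi)
  obtain ⟨a', ha'⟩ := exists_isArm_getVert_add_one hp hv hK hi (hpK i hi₀ hi)
  have hne : p.getVert (i - 1) ≠ p.getVert (i + 1) := fun heq ↦ by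
    have := hp.getVert_injOn (show i - 1 ≤ p.length by omega) hi heq
    omega
  have hinj : Function.Injective ![w, p.getVert (i - 1), p.getVert (i + 1)] := by
    simp [Function.Injective, Fin.forall_fin_succ, hpred, hsucc, hne, hpred.symm, hsucc.symm,
      hne.symm]
  have harms : ∀ k, IsArm G (p.getVert i) (![w, p.getVert (i - 1), p.getVert (i + 1)] k)
      (![y, a, a'] k) := by
    simp [Fin.forall_fin_succ, IsArm.mk hw hy hyne, ha, ha']
  obtain ⟨e, he⟩ := exists_longClawGraph_embedding_of_isArm hC4 hC5 (hN i hi₀ hi) hinj harms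
  exact hclaw i hi₀ hi e he

end Spine

section Component

variable {V : Type*} {G : SimpleGraph V} {K : Set V} {u v w : V} {p : G.Walk u v} {i : ℕ}

theorem supp_connectedComponentMk_subset {S : Set V} (hu : u ∈ S)
    (hS : ∀ y ∈ S, ∀ z, G.Adj y z → z ∈ S) : (G.connectedComponentMk u).supp ⊆ S := by
  intro w hw
  obtain ⟨q⟩ := (ConnectedComponent.exact hw).symm
  induction q with
  | nil => exact hu
  | cons h q ih => exact ih (hS _ hu _ h) (ConnectedComponent.sound q.reachable.symm)

theorem getVert_mem_component (hpK : ∀ i, 0 < i → i < p.length → p.getVert i ∉ K)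
    (h₁ : p.getVert 1 ∈ Kᶜ) (hi₀ : 0 < i) (hi : i < p.length) :
    p.getVert i ∈ Subtype.val '' ((G.induce Kᶜ).connectedComponentMk ⟨p.getVert 1, h₁⟩).supp := by
  induction i, hi₀ using Nat.le_induction with
  | base => exact ⟨_, rfl, rfl⟩
  | succ i hi₀ ih =>
    obtain ⟨x, hx, hxi⟩ := ih (by omega)
    refine ⟨⟨p.getVert (i + 1), hpK _ (by omega) hi⟩, ?_, rfl⟩
    refine ConnectedComponent.mem_supp_of_adj_mem_supp _ hx ?_
    rw [induce_adj, hxi]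
    exact p.adj_getVert_succ (by omega)

namespace IsCaterpillarSpine

theorem eq_getVert_or_neighborSet_eq (hs : IsCaterpillarSpine p) (hu : u ∈ K) (hv : v ∈ K)
    (hlen : 1 < p.length) (h₁ : p.getVert 1 ∈ Kᶜ)
    (hw : w ∈ Subtype.val '' ((G.induce Kᶜ).connectedComponentMk ⟨p.getVert 1, h₁⟩).supp) :
    ∃ i, 0 < i ∧ i < p.length ∧ (w = p.getVert i ∨ G.neighborSet w = {p.getVert i}) := by
  let S : Set V :=
    {w | ∃ i, 0 < i ∧ i < p.length ∧ (w = p.getVert i ∨ G.neighborSet w = {p.getVert i})}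
  have hclosed : ∀ y ∈ S, ∀ z ∉ K, G.Adj y z → z ∈ S := by
    rintro y ⟨i, hi₀, hi, rfl | hy⟩ z hzK hz
    · have hne_u : i - 1 ≠ 0 ∨ z ≠ p.getVert (i - 1) := by
        by_contra! ⟨h0, hzu⟩
        exact hzK (by rwa [hzu, h0, p.getVert_zero])
      have hne_v : i + 1 ≠ p.length ∨ z ≠ p.getVert (i + 1) := by
        by_contra! ⟨hlast, hzv⟩
        exact hzK (by rwa [hzv, hlast, p.getVert_length])
      obtain hpred | hsucc | hpendant := hs i hi₀ hi z hz
      · exact ⟨i - 1, by grind, by omega, .inl hpred⟩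
      · exact ⟨i + 1, by omega, by grind, .inl hsucc⟩
      · exact ⟨i, hi₀, hi, .inr hpendant⟩
    · exact ⟨i, hi₀, hi, .inl (hy.subset hz)⟩
  obtain ⟨x, hx, rfl⟩ := hw
  exact supp_connectedComponentMk_subset (S := Subtype.val ⁻¹' S) ⟨1, one_pos, hlen, .inl rfl⟩
    (fun y hy z hz ↦ hclosed y hy z z.2 hz) hx

theorem adj_iff_of_mem (hs : IsCaterpillarSpine p) (hu : u ∈ K) (hv : v ∈ K)
    (hK : ∀ y ∈ K, ∃ z ∈ K, G.Adj y z) (hpK : ∀ i, 0 < i → i < p.length → p.getVert i ∉ K)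
    (hlen : 1 < p.length) (h₁ : p.getVert 1 ∈ Kᶜ)
    (hw : w ∈ Subtype.val '' ((G.induce Kᶜ).connectedComponentMk ⟨p.getVert 1, h₁⟩).supp)
    {y : V} (hy : y ∈ K) :
    G.Adj w y ↔ (w = p.getVert 1 ∧ y = u) ∨ (w = p.getVert (p.length - 1) ∧ y = v) := by
  constructor
  · intro hwy
    obtain ⟨i, hi₀, hi, rfl | hpendant⟩ := hs.eq_getVert_or_neighborSet_eq hu hv hlen h₁ hw
    · obtain rfl | rfl | hpendant := hs i hi₀ hi y hwy
      · obtain rfl : i = 1 := by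
          by_contra hi₁
          exact hpK _ (by omega) (by omega) hy
        exact .inl ⟨rfl, p.getVert_zero⟩
      · obtain hlast : i + 1 = p.length := by
          by_contra hlast
          exact hpK _ (by omega) (by omega) hy
        exact .inr ⟨by rw [← hlast, Nat.add_sub_cancel], by rw [hlast, p.getVert_length]⟩
      · obtain ⟨z, hzK, hz⟩ := hK y hy
        exact absurd (hpendant.subset hz ▸ hzK) (hpK i hi₀ hi)
    · exact absurd (hpendant.subset hwy ▸ hy) (hpK i hi₀ hi)
  · rintro (⟨rfl, rfl⟩ | ⟨rfl, rfl⟩)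
    · simpa using (p.adj_getVert_succ (i := 0) (by omega)).symm
    · simpa [Nat.sub_add_cancel hlen.le] using p.adj_getVert_succ (i := p.length - 1) (by omega)

end IsCaterpillarSpine

end Component

theorem exists_adj_of_mem_longClaw_union_triangle {V : Type*} {G : SimpleGraph V} {Js Ts : Set V}
    (hJ : Nonempty (longClawGraph ≃g G.induce Js)) (hT : Nonempty (triangleGraph ≃g G.induce Ts)) :
    ∀ y ∈ Js ∪ Ts, ∃ z ∈ Js ∪ Ts, G.Adj y z := by
  rintro y (hy | hy)
  · exact (exists_adj_of_iso_induce hJ.some (by decide) hy).imp fun z hz ↦ ⟨.inl hz.1, hz.2⟩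
  · have hadj (i : Fin 3) : ∃ j, triangleGraph.Adj i j := (exists_ne i).imp fun _ ↦ Ne.symm
    exact (exists_adj_of_iso_induce hT.some hadj hy).imp fun z hz ↦ ⟨.inr hz.1, hz.2⟩

theorem isCaterpillarSpine_of_closest {V : Type*} {G : SimpleGraph V}
    (hC4 : ¬ ContainsInduced G (cycleGraph 4)) (hC5 : ¬ ContainsInduced G (cycleGraph 5))
    {Js Ts : Set V} (hJ : Nonempty (longClawGraph ≃g G.induce Js))
    (hT : Nonempty (triangleGraph ≃g G.induce Ts)) {u v : V} (hu : u ∈ Js) (hv : v ∈ Ts)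
    {p : G.Walk u v} (hp : p.IsPath)
    (hclosest : ∀ J T : Set V, Nonempty (longClawGraph ≃g G.induce J) →
      Nonempty (triangleGraph ≃g G.induce T) → eSetDist G J T < ⊤ →
      p.length ≤ eSetDist G J T) : IsCaterpillarSpine p := by
  have hfinite : eSetDist G Js Ts < ⊤ :=
    (eSetDist_le_length hu hv p).trans_lt (ENat.natCast_lt_top _)
  refine isCaterpillarSpine_of_isPath hC4 hC5 hp (.inl hu) (.inr hv)
    (exists_adj_of_mem_longClaw_union_triangle hJ hT)
    (fun i ↦ getVert_notMem_union hu hv (hclosest Js Ts hJ hT hfinite))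
    (fun i _ hi ↦ ?_) (fun i hi₀ hi e he ↦ ?_)
  · refine isIndepSet_neighborSet_of_length_lt (d := p.length) (fun T hT ↦ ?_) hu
      (p.take i).reverse ?_
    · rw [eSetDist_comm]
      exact hclosest Js T hJ hT
    · rw [Walk.length_reverse, Walk.take_length]
      omega
  · have hle := le_length_of_embedding (fun J hJ ↦ hclosest J Ts hJ hT) e he hv (p.drop i)
    rw [Walk.drop_length] at hle
    omega

theorem stmt13_general {V : Type*} (G : SimpleGraph V)
    (hC4 : ¬ ContainsInduced G (cycleGraph 4)) (hC5 : ¬ ContainsInduced G (cycleGraph 5))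
    (Js Ts : Set V)
    (hJ : Nonempty (longClawGraph ≃g G.induce Js))
    (hT : Nonempty (triangleGraph ≃g G.induce Ts))
    (d : ℕ) (hd : eSetDist G Js Ts = (d : ℕ∞)) (hd2 : 2 ≤ d)
    (hclosest : ∀ J T : Set V, Nonempty (longClawGraph ≃g G.induce J) →
      Nonempty (triangleGraph ≃g G.induce T) → eSetDist G J T < ⊤ →
      (d : ℕ∞) ≤ eSetDist G J T)
    (u v : V) (hu : u ∈ Js) (hv : v ∈ Ts)
    (p : G.Walk u v) (hp : p.IsPath) (hlen : p.length = d)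
    (hx1 : p.getVert 1 ∈ (Js ∪ Ts)ᶜ) :
    ({w : V | ∃ i, 1 ≤ i ∧ i ≤ d - 1 ∧ w = p.getVert i} ⊆
        Subtype.val ''
          ((G.induce (Js ∪ Ts)ᶜ).connectedComponentMk ⟨p.getVert 1, hx1⟩).supp) ∧
    (∀ w ∈ Subtype.val ''
        ((G.induce (Js ∪ Ts)ᶜ).connectedComponentMk ⟨p.getVert 1, hx1⟩).supp,
      w ∉ {w : V | ∃ i, 1 ≤ i ∧ i ≤ d - 1 ∧ w = p.getVert i} →
      ∃ i, 1 ≤ i ∧ i ≤ d - 1 ∧ G.Adj w (p.getVert i) ∧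
        ∀ y, G.Adj w y → y = p.getVert i) ∧
    (∀ w ∈ Subtype.val ''
        ((G.induce (Js ∪ Ts)ᶜ).connectedComponentMk ⟨p.getVert 1, hx1⟩).supp,
      ∀ y ∈ Js ∪ Ts,
        (G.Adj w y ↔ ((w = p.getVert 1 ∧ y = u) ∨ (w = p.getVert (d - 1) ∧ y = v)))) := by
  subst hlen
  have hK := exists_adj_of_mem_longClaw_union_triangle hJ hT
  have hpK : ∀ i, 0 < i → i < p.length → p.getVert i ∉ Js ∪ Ts := fun i ↦
    getVert_notMem_union hu hv hd.ge
  have hspine := isCaterpillarSpine_of_closest hC4 hC5 hJ hT hu hv hp hclosest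
  refine ⟨?_, fun w hw hwp ↦ ?_, fun w hw y hy ↦
    hspine.adj_iff_of_mem (.inl hu) (.inr hv) hK hpK hd2 hx1 hw hy⟩
  · rintro w ⟨i, hi₀, hi, rfl⟩
    exact getVert_mem_component hpK hx1 hi₀ (by omega)
  · obtain ⟨i, hi₀, hi, hwi | hpendant⟩ :=
      hspine.eq_getVert_or_neighborSet_eq (.inl hu) (.inr hv) hd2 hx1 hw
    · exact absurd ⟨i, hi₀, by omega, hwi⟩ hwp
    · exact ⟨i, hi₀, by omega, Set.eq_singleton_iff_unique_mem.1 hpendant⟩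

theorem stmt13 {V : Type} [Fintype V] (G : SimpleGraph V)
    (hC : ∀ j, 4 ≤ j → j ≤ 10 → ¬ ContainsInduced G (SimpleGraph.cycleGraph j))
    (Js Ts : Set V)
    (hJ : Nonempty (longClawGraph ≃g G.induce Js))
    (hT : Nonempty (triangleGraph ≃g G.induce Ts))
    (d : ℕ) (hd : eSetDist G Js Ts = (d : ℕ∞)) (hd2 : 2 ≤ d)
    (hclosest : ∀ J T : Set V, Nonempty (longClawGraph ≃g G.induce J) →
      Nonempty (triangleGraph ≃g G.induce T) → eSetDist G J T < ⊤ →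
      (d : ℕ∞) ≤ eSetDist G J T)
    (u v : V) (hu : u ∈ Js) (hv : v ∈ Ts)
    (p : G.Walk u v) (hp : p.IsPath) (hlen : p.length = d)
    (hx1 : p.getVert 1 ∈ (Js ∪ Ts)ᶜ) :
    -- (a) the spine is contained in the component `C`, and every other vertex of `C`
    -- has exactly one neighbor in `G`, and that neighbor lies on the spine
    ({w : V | ∃ i, 1 ≤ i ∧ i ≤ d - 1 ∧ w = p.getVert i} ⊆
        Subtype.val ''
          ((G.induce (Js ∪ Ts)ᶜ).connectedComponentMk ⟨p.getVert 1, hx1⟩).supp) ∧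
    (∀ w ∈ Subtype.val ''
        ((G.induce (Js ∪ Ts)ᶜ).connectedComponentMk ⟨p.getVert 1, hx1⟩).supp,
      w ∉ {w : V | ∃ i, 1 ≤ i ∧ i ≤ d - 1 ∧ w = p.getVert i} →
      ∃ i, 1 ≤ i ∧ i ≤ d - 1 ∧ G.Adj w (p.getVert i) ∧
        ∀ y, G.Adj w y → y = p.getVert i) ∧
    -- (b) the only edges of `G` between `C` and `Js ∪ Ts` are `{u, x 1}` and `{x (d-1), v}`
    (∀ w ∈ Subtype.val ''
        ((G.induce (Js ∪ Ts)ᶜ).connectedComponentMk ⟨p.getVert 1, hx1⟩).supp,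
      ∀ y ∈ Js ∪ Ts,
        (G.Adj w y ↔ ((w = p.getVert 1 ∧ y = u) ∨ (w = p.getVert (d - 1) ∧ y = v)))) := by
  exact stmt13_general G (hC 4 (by norm_num) (by norm_num)) (hC 5 (by norm_num) (by norm_num))
    Js Ts hJ hT d hd hd2 hclosest u v hu hv p hp hlen hx1
end
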